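/- arXiv:1409.7890 — 2 statements merged into one kernel-verified Lean document; each statement's English description precedes it below -/
import Mathlib

section
/- For the d-dimensional HEX board H(n,d), if every interior vertex is assigned a color in {1,...,d} (boundary vertices having their preassigned colors), then for some i ∈ {1,...,d} there is a path of vertices of color i in H(n,d) connecting a vertex with i-th coordinate -1 to a vertex with i-th coordinate n+1. -/
/-- A vertex of the `d`-dimensional HEX board `H(n,d)`: all coordinates in `[-1, n+1]`. -/
def inBoard (n d : ℕ) (v : Fin d → ℤ) : Prop := ∀ i, -1 ≤ v i ∧ v i ≤ (n : ℤ) + 1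

/-- Interior vertex of `H(n,d)`: all coordinates in `[0, n]`. -/
def interiorVertex (n d : ℕ) (v : Fin d → ℤ) : Prop := ∀ i, 0 ≤ v i ∧ v i ≤ (n : ℤ)

/-- Adjacency in `H(n,d)`: `v ≠ w` and `v - w ∈ {0,1}^d ∪ {0,-1}^d`. -/
def hexAdjD (d : ℕ) (v w : Fin d → ℤ) : Prop :=
  v ≠ w ∧ ((∀ i, v i - w i = 0 ∨ v i - w i = 1) ∨ (∀ i, v i - w i = 0 ∨ v i - w i = -1))

/-!
Suppose no vertex joined to its own lower face by a walk of its own color lies on the opposite upper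
face. In Kuhn's triangulation of `ℝ^d` call a facet of a simplex a door if its `d` vertices are all
joined to their lower faces in this way and carry all `d` colors, and count the pairs consisting of
a door and a simplex containing it. Crossing the door is an involution on these pairs, so their
number is even. If the vertex opposite the door lies in the box, it is adjacent to the door vertex
of its own color, hence is also joined to its lower face, and exchanging these two vertices gives
exactly one other door of the same simplex; so the number of such pairs is even too. If the opposite
vertex lies outside the box, it cannot lie beyond an upper face, so the door lies in a lower face,
and the boundary coloring allows just one such door, in the lowest corner: a contradiction.
-/

theorem even_ncard_of_involution {α : Type*} {s : Set α} (hs : s.Finite) (f : α → α)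
    (hmaps : ∀ x ∈ s, f x ∈ s) (hinvol : ∀ x ∈ s, f (f x) = x) (hne : ∀ x ∈ s, f x ≠ x) :
    Even s.ncard := by
  lift s to Finset α using hs
  rw [Set.ncard_coe_finset, ← ZMod.natCast_eq_zero_iff_even, Finset.card_eq_sum_ones, Nat.cast_sum]
  exact Finset.sum_involution (fun x _ => f x) (fun _ _ => by decide) (fun x hx _ => hne x hx)
    hmaps hinvol

variable {d : ℕ} {a b : Fin d → ℤ} {κ : (Fin d → ℤ) → Fin d}

/-! ### Monochromatic walks -/

/-- The adjacency `hexAdjD` of the HEX board as a graph on all of `ℤ^d`, so that paths in the board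
are walks of Mathlib. -/
def hexGraph (d : ℕ) : SimpleGraph (Fin d → ℤ) where
  Adj := hexAdjD d
  symm := ⟨fun v w ⟨hne, h⟩ => ⟨hne.symm, h.symm.imp
    (fun h i => by have := h i; omega) (fun h i => by have := h i; omega)⟩⟩
  loopless := ⟨fun _ h => h.1 rfl⟩

theorem hexGraph_adj_of_lt_of_le_add_one {v w : Fin d → ℤ} (hlt : v < w) (hle : w ≤ v + 1) :
    (hexGraph d).Adj v w := by
  refine ⟨hlt.ne, Or.inr fun i => ?_⟩
  have hi : v i ≤ w i := hlt.le i
  have hi' : w i ≤ v i + 1 := hle i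
  omega

/-- The vertex `v` of the box `[a, b]` is joined to the lower face `{x | x i = a i}` belonging to
its own color `i = κ v` by a walk of that color inside the box. -/
def IsReached (a b : Fin d → ℤ) (κ : (Fin d → ℤ) → Fin d) (v : Fin d → ℤ) : Prop :=
  ∃ u, u (κ v) = a (κ v) ∧
    ∃ p : (hexGraph d).Walk u v, ∀ w ∈ p.support, w ∈ Set.Icc a b ∧ κ w = κ v

namespace IsReached

variable {v w : Fin d → ℤ}

theorem of_eq (hv : v ∈ Set.Icc a b) (h : v (κ v) = a (κ v)) : IsReached a b κ v :=
  ⟨v, h, .nil, by simpa using hv⟩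

theorem mem_Icc (h : IsReached a b κ v) : v ∈ Set.Icc a b := by
  obtain ⟨_, _, p, hp⟩ := h
  exact (hp v p.end_mem_support).1

theorem adj (h : IsReached a b κ v) (hw : w ∈ Set.Icc a b) (hadj : (hexGraph d).Adj v w)
    (hκ : κ v = κ w) : IsReached a b κ w := by
  obtain ⟨u, hu, p, hp⟩ := h
  rw [hκ] at hu hp
  refine ⟨u, hu, p.concat hadj, fun x hx => ?_⟩
  rw [SimpleGraph.Walk.support_concat, List.mem_append, List.mem_singleton] at hx
  rcases hx with hx | rfl
  · exact hp x hx
  · exact ⟨hw, rfl⟩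

end IsReached

/-! ### Kuhn simplices -/

/-- The steps between consecutive vertices of a Kuhn simplex read cyclically: the `d` unit vectors
and, to close the cycle, `-(1, …, 1)`. -/
def kuhnStep : Fin (d + 1) → Fin d → ℤ :=
  Fin.cons (-1) fun i => Pi.single i 1

theorem kuhnStep_pos {k : Fin (d + 1)} (hk : k ≠ 0) : 0 < (kuhnStep k : Fin d → ℤ) := by
  obtain ⟨i, rfl⟩ := Fin.exists_succ_eq_of_ne_zero hk
  simp [kuhnStep]

theorem kuhnStep_injective : Function.Injective (kuhnStep : Fin (d + 1) → Fin d → ℤ) := by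
  refine Fin.cons_injective_iff.2 ⟨?_, fun i j hij => ?_⟩
  · rintro ⟨i, hi⟩
    simpa using congrFun hi i
  · by_contra hne
    simpa [hne] using congrFun hij i

/-- The vertices of a `d`-simplex of Kuhn's triangulation of `ℝ^d`, listed cyclically. The vertex
with index `0` is not the least one but an arbitrary marked vertex, so that `v` encodes a simplex
together with its facet `{v m | m ≠ 0}`. -/
def IsKuhnCycle (v : Fin (d + 1) → Fin d → ℤ) : Prop :=
  ∃ π : Equiv.Perm (Fin (d + 1)), ∀ m, v (m + 1) = v m + kuhnStep (π m)

/-- The reflection of the marked vertex in its facet: this keeps all other vertices and gives the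
simplex on the other side of the facet. -/
def kuhnPivot (v : Fin (d + 1) → Fin d → ℤ) : Fin (d + 1) → Fin d → ℤ :=
  Function.update v 0 (v (-1) + v 1 - v 0)

theorem kuhnPivot_of_ne_zero (v : Fin (d + 1) → Fin d → ℤ) {m : Fin (d + 1)} (hm : m ≠ 0) :
    kuhnPivot v m = v m :=
  Function.update_of_ne hm _ _

theorem kuhnPivot_zero (v : Fin (d + 1) → Fin d → ℤ) : kuhnPivot v 0 = v (-1) + v 1 - v 0 :=
  Function.update_self ..

theorem kuhnPivot_kuhnPivot [NeZero d] (v : Fin (d + 1) → Fin d → ℤ) :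
    kuhnPivot (kuhnPivot v) = v := by
  have h1 : (1 : Fin (d + 1)) ≠ 0 := one_ne_zero
  funext m
  rcases eq_or_ne m 0 with rfl | hm
  · rw [kuhnPivot_zero, kuhnPivot_zero, kuhnPivot_of_ne_zero v h1,
      kuhnPivot_of_ne_zero v (neg_ne_zero.2 h1), sub_sub_cancel]
  · rw [kuhnPivot_of_ne_zero _ hm, kuhnPivot_of_ne_zero _ hm]

namespace IsKuhnCycle

variable {v : Fin (d + 1) → Fin d → ℤ}

theorem rotate (h : IsKuhnCycle v) (r : Fin (d + 1)) : IsKuhnCycle fun m => v (r + m) := by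
  obtain ⟨π, hπ⟩ := h
  exact ⟨(Equiv.addLeft r).trans π, fun m => by simp [← add_assoc, hπ]⟩

theorem pivot_ne [NeZero d] (h : IsKuhnCycle v) : kuhnPivot v ≠ v := by
  obtain ⟨π, hπ⟩ := h
  intro heq
  have h0 := congrFun heq 0
  have h1 := hπ (-1)
  have h2 := hπ 0
  rw [kuhnPivot_zero] at h0
  rw [neg_add_cancel] at h1
  rw [zero_add] at h2
  have hstep : kuhnStep (π (-1)) = kuhnStep (π 0) := by
    linear_combination h2 - h1 - h0
  have := π.injective (kuhnStep_injective hstep)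
  simp at this

theorem pivot [NeZero d] (h : IsKuhnCycle v) : IsKuhnCycle (kuhnPivot v) := by
  obtain ⟨π, hπ⟩ := h
  have h1 : (1 : Fin (d + 1)) ≠ 0 := one_ne_zero
  have hneg : (-1 : Fin (d + 1)) ≠ 0 := neg_ne_zero.2 h1
  have hstep := hπ (-1)
  have hstep' := hπ 0
  rw [neg_add_cancel] at hstep
  rw [zero_add] at hstep'
  -- Reflecting the marked vertex interchanges the step into it and the step out of it.
  refine ⟨(Equiv.swap (-1) 0).trans π, fun m => ?_⟩
  rw [Equiv.trans_apply]
  rcases eq_or_ne m (-1) with rfl | hm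
  · rw [neg_add_cancel, kuhnPivot_zero, kuhnPivot_of_ne_zero v hneg, Equiv.swap_apply_left,
      hstep']
    ring
  rcases eq_or_ne m 0 with rfl | hm0
  · rw [zero_add, kuhnPivot_zero, kuhnPivot_of_ne_zero v h1, Equiv.swap_apply_right]
    linear_combination hstep
  · rw [Equiv.swap_apply_of_ne_of_ne hm hm0, kuhnPivot_of_ne_zero v hm0,
      kuhnPivot_of_ne_zero v (fun h => hm (eq_neg_of_add_eq_zero_left h)), hπ]

theorem exists_strictMono_rotate (h : IsKuhnCycle v) :
    ∃ r, StrictMono (fun m => v (r + m)) ∧ v (r + Fin.last d) = v r + 1 := by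
  obtain ⟨π, hπ⟩ := h
  have hlast : π.symm 0 + 1 + Fin.last d = π.symm 0 := by
    rw [add_assoc, add_comm 1, Fin.last_add_one, add_zero]
  refine ⟨π.symm 0 + 1, Fin.strictMono_iff_lt_succ.2 fun i => ?_, ?_⟩
  · have hne : π (π.symm 0 + 1 + i.castSucc) ≠ 0 := by
      intro hi
      have hi := ((Equiv.eq_symm_apply π).2 hi).trans hlast.symm
      exact i.castSucc_lt_last.ne (add_left_cancel hi)
    rw [← Fin.coeSucc_eq_succ, ← add_assoc, hπ]
    exact lt_add_of_pos_right _ (kuhnStep_pos hne)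
  · rw [hlast, hπ, Equiv.apply_symm_apply, kuhnStep, Fin.cons_zero, neg_add_cancel_right]

theorem le_add_one (h : IsKuhnCycle v) (m m' : Fin (d + 1)) : v m ≤ v m' + 1 := by
  obtain ⟨r, hmono, hlast⟩ := h.exists_strictMono_rotate
  have hm := hmono.monotone (Fin.le_last (m - r))
  have hm' := hmono.monotone (Fin.zero_le (m' - r))
  simp only [add_sub_cancel, add_zero, hlast] at hm hm'
  exact hm.trans (add_le_add_left hm' 1)

theorem lt_or_gt (h : IsKuhnCycle v) {m m' : Fin (d + 1)} (hne : m ≠ m') :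
    v m < v m' ∨ v m' < v m := by
  obtain ⟨r, hmono, -⟩ := h.exists_strictMono_rotate
  simpa using (sub_left_injective.ne hne : m - r ≠ m' - r).lt_or_gt.imp
    (fun h => hmono h) (fun h => hmono h)

theorem adj (h : IsKuhnCycle v) {m m' : Fin (d + 1)} (hne : m ≠ m') :
    (hexGraph d).Adj (v m) (v m') :=
  (h.lt_or_gt hne).elim (fun hlt => hexGraph_adj_of_lt_of_le_add_one hlt (h.le_add_one _ _))
    (fun hlt => (hexGraph_adj_of_lt_of_le_add_one hlt (h.le_add_one _ _)).symm)

theorem strictMono_and_last_eq_of_forall_not_le (h : IsKuhnCycle v) (h0 : ∀ m ≠ 0, ¬ v m ≤ v 0) :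
    StrictMono v ∧ v (Fin.last d) = v 0 + 1 := by
  obtain ⟨r, hmono, hlast⟩ := h.exists_strictMono_rotate
  obtain rfl : r = 0 := by
    by_contra hr
    have := hmono.monotone (Fin.zero_le (-r))
    simp only [add_zero, add_neg_cancel] at this
    exact h0 r hr this
  simpa using And.intro hmono hlast

end IsKuhnCycle

/-! ### Doors -/

/-- The boundary condition on the lower faces of the box `[a, b]`: a vertex on some of them has the
least `i` with `v i = a i` as its color. -/
def HasLeastLowerColor (a b : Fin d → ℤ) (κ : (Fin d → ℤ) → Fin d) : Prop :=
  ∀ v ∈ Set.Icc a b, ∀ i, v i = a i → IsLeast {j | v j = a j} (κ v)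

/-- A door is a facet whose vertices are reached and carry each color exactly once, together with
one of the two simplices containing it. The marked vertex `v 0` may lie outside the box `[a, b]`. -/
structure IsDoor (a b : Fin d → ℤ) (κ : (Fin d → ℤ) → Fin d) (v : Fin (d + 1) → Fin d → ℤ) :
    Prop where
  isKuhnCycle : IsKuhnCycle v
  isReached : ∀ m ≠ 0, IsReached a b κ (v m)
  bijOn : Set.BijOn (κ ∘ v) {0}ᶜ Set.univ

namespace IsDoor

variable {v : Fin (d + 1) → Fin d → ℤ}

theorem exists_color_eq (h : IsDoor a b κ v) (c : Fin d) : ∃ m ≠ 0, κ (v m) = c := by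
  simpa using h.bijOn.surjOn (Set.mem_univ c)

theorem pivot [NeZero d] (h : IsDoor a b κ v) : IsDoor a b κ (kuhnPivot v) where
  isKuhnCycle := h.isKuhnCycle.pivot
  isReached m hm := by
    rw [kuhnPivot_of_ne_zero v hm]
    exact h.isReached m hm
  bijOn := h.bijOn.congr fun m hm => by simp [kuhnPivot_of_ne_zero v hm]

theorem rotate (h : IsDoor a b κ v) (h0 : v 0 ∈ Set.Icc a b) {r : Fin (d + 1)} (hr : r ≠ 0)
    (hκ : κ (v r) = κ (v 0)) : IsDoor a b κ fun m => v (r + m) where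
  isKuhnCycle := h.isKuhnCycle.rotate r
  isReached m _ := by
    rcases eq_or_ne (r + m) 0 with hrm | hrm
    · rw [hrm]
      exact (h.isReached r hr).adj h0 (h.isKuhnCycle.adj hr) hκ
    · exact h.isReached _ hrm
  bijOn := by
    have hswap : (κ ∘ v) ∘ Equiv.swap 0 r = κ ∘ v := by
      funext m
      by_cases hm : m = 0 ∨ m = r
      · rcases hm with rfl | rfl <;> simp [hκ]
      · rw [not_or] at hm
        simp [Equiv.swap_apply_of_ne_of_ne hm.1 hm.2]
    have hbij : Set.BijOn (Equiv.swap 0 r ∘ (r + ·)) {0}ᶜ {0}ᶜ :=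
      ((Equiv.addLeft r).trans (Equiv.swap 0 r)).bijOn fun m => by
        simp [Equiv.swap_apply_eq_iff]
    change Set.BijOn ((κ ∘ v) ∘ (r + ·)) {0}ᶜ Set.univ
    rw [← hswap]
    exact h.bijOn.comp hbij

theorem apply_zero_le_upper (h : IsDoor a b κ v)
    (hno : ∀ w, IsReached a b κ w → w (κ w) ≠ b (κ w)) : v 0 ≤ b := by
  intro i
  obtain ⟨m, hm, rfl⟩ := h.exists_color_eq i
  have hlt := ((h.isReached m hm).mem_Icc.2 _).lt_of_ne (hno _ (h.isReached m hm))
  exact (h.isKuhnCycle.le_add_one 0 m _).trans (Int.add_one_le_of_lt hlt)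

/-- The facet lies in the `i`-th lower face because its vertices exceed `v 0` by at most `1`. -/
theorem isLeast_color (h : IsDoor a b κ v) (hκ : HasLeastLowerColor a b κ) {i : Fin d}
    (hi : v 0 i < a i) {m : Fin (d + 1)} (hm : m ≠ 0) :
    IsLeast {j | v m j = a j} (κ (v m)) := by
  have hmem := (h.isReached m hm).mem_Icc
  have hle : v m i ≤ v 0 i + 1 := h.isKuhnCycle.le_add_one m 0 i
  exact hκ _ hmem i (le_antisymm (by omega) (hmem.1 i))

theorem strictMono_and_last_eq (h : IsDoor a b κ v) {i : Fin d} (hi : v 0 i < a i) :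
    StrictMono v ∧ v (Fin.last d) = v 0 + 1 :=
  h.isKuhnCycle.strictMono_and_last_eq_of_forall_not_le fun m hm hle =>
    (hi.trans_le ((h.isReached m hm).mem_Icc.1 i)).not_ge (hle i)

theorem color_succ (h : IsDoor a b κ v) (hκ : HasLeastLowerColor a b κ) {i : Fin d}
    (hi : v 0 i < a i) (j : Fin d) : κ (v j.succ) = j := by
  have hmono : StrictMono fun j : Fin d => κ (v j.succ) := by
    intro j k hjk
    have hne : κ (v j.succ) ≠ κ (v k.succ) := h.bijOn.injOn.ne j.succ_ne_zero k.succ_ne_zero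
      ((Fin.succ_injective _).ne hjk.ne)
    have hle : v j.succ ≤ v k.succ :=
      (h.strictMono_and_last_eq hi).1.monotone (Fin.succ_le_succ_iff.2 hjk.le)
    -- As `v j.succ ≤ v k.succ`, the color of `v k.succ` is a candidate for that of `v j.succ`.
    have hk : v j.succ (κ (v k.succ)) = a (κ (v k.succ)) :=
      le_antisymm ((hle _).trans_eq (h.isLeast_color hκ hi k.succ_ne_zero).1)
        ((h.isReached _ j.succ_ne_zero).mem_Icc.1 _)
    exact ((h.isLeast_color hκ hi j.succ_ne_zero).2 hk).lt_of_ne hne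
  exact congrFun hmono.eq_id j

theorem apply_succ (h : IsDoor a b κ v) (hκ : HasLeastLowerColor a b κ) {i : Fin d}
    (hi : v 0 i < a i) (j k : Fin d) : v j.succ k = a k + if k < j then 1 else 0 := by
  have hj : IsLeast {l | v j.succ l = a l} j := by
    simpa only [h.color_succ hκ hi] using h.isLeast_color hκ hi j.succ_ne_zero
  have hk : v k.succ k = a k := by
    simpa only [h.color_succ hκ hi, Set.mem_ofPred_eq] using
      (h.isLeast_color hκ hi k.succ_ne_zero).1
  have hlow : a k ≤ v j.succ k := (h.isReached _ j.succ_ne_zero).mem_Icc.1 k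
  split_ifs with hkj
  · have hne : v j.succ k ≠ a k := fun heq => hkj.not_ge (hj.2 heq)
    have hle : v j.succ k ≤ v k.succ k + 1 := h.isKuhnCycle.le_add_one _ _ k
    omega
  · have hle : v j.succ k ≤ v k.succ k :=
      (h.strictMono_and_last_eq hi).1.monotone (by simpa using hkj) k
    omega

end IsDoor

/-- The simplex with vertices `a`, `a + e₀`, `a + e₀ + e₁`, …, `a + 1` in the lowest corner of the
box, with marked vertex `a + 1`. -/
def kuhnCorner (a : Fin d → ℤ) : Fin (d + 1) → Fin d → ℤ :=
  Fin.cons (a + 1) fun j i => a i + if i < j then 1 else 0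

theorem isKuhnCycle_kuhnCorner [NeZero d] (a : Fin d → ℤ) : IsKuhnCycle (kuhnCorner a) := by
  obtain ⟨D, rfl⟩ := Nat.exists_eq_succ_of_ne_zero (NeZero.ne d)
  refine ⟨1, fun m => ?_⟩
  cases m using Fin.cases with
  | zero =>
    rw [zero_add, ← Fin.succ_zero_eq_one]
    funext i
    simp [kuhnCorner, kuhnStep]
  | succ j =>
    cases j using Fin.lastCases with
    | last =>
      rw [Fin.succ_last, Fin.last_add_one, ← Fin.succ_last]
      funext i
      rcases (Fin.le_last i).lt_or_eq with hi | rfl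
      · simp [kuhnCorner, kuhnStep, hi, hi.ne]
      · simp [kuhnCorner, kuhnStep]
    | cast j =>
      rw [Fin.succ_castSucc, Fin.coeSucc_eq_succ, ← Fin.succ_castSucc]
      funext i
      rcases lt_trichotomy i j.castSucc with hi | rfl | hi
      · simp [kuhnCorner, kuhnStep, hi, hi.ne, hi.trans j.castSucc_lt_succ]
      · simp [kuhnCorner, kuhnStep]
      · have hi' : ¬ i < j.succ := not_lt.2 (Fin.castSucc_lt_iff_succ_le.1 hi)
        simp [kuhnCorner, kuhnStep, hi', hi.ne', hi.not_gt]

theorem kuhnCorner_succ_mem_Icc (hab : ∀ i, a i < b i) (j : Fin d) :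
    kuhnCorner a j.succ ∈ Set.Icc a b := by
  constructor <;> intro i <;> have := hab i <;> simp only [kuhnCorner, Fin.cons_succ] <;>
    split_ifs <;> omega

theorem color_kuhnCorner_succ (hab : ∀ i, a i < b i) (hκ : HasLeastLowerColor a b κ)
    (j : Fin d) : κ (kuhnCorner a j.succ) = j := by
  refine (hκ _ (kuhnCorner_succ_mem_Icc hab j) j (by simp [kuhnCorner])).unique ?_
  simp [IsLeast, lowerBounds, kuhnCorner]

theorem isDoor_kuhnCorner [NeZero d] (hab : ∀ i, a i < b i) (hκ : HasLeastLowerColor a b κ) :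
    IsDoor a b κ (kuhnCorner a) where
  isKuhnCycle := isKuhnCycle_kuhnCorner a
  isReached m hm := by
    obtain ⟨j, rfl⟩ := Fin.exists_succ_eq_of_ne_zero hm
    refine .of_eq (kuhnCorner_succ_mem_Icc hab j) ?_
    rw [color_kuhnCorner_succ hab hκ]
    simp [kuhnCorner]
  bijOn := by
    refine ⟨Set.mapsTo_univ _ _, fun m hm m' hm' heq => ?_,
      fun j _ => ⟨j.succ, j.succ_ne_zero, color_kuhnCorner_succ hab hκ j⟩⟩
    obtain ⟨j, rfl⟩ := Fin.exists_succ_eq_of_ne_zero hm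
    obtain ⟨j', rfl⟩ := Fin.exists_succ_eq_of_ne_zero hm'
    rwa [Function.comp_apply, Function.comp_apply, color_kuhnCorner_succ hab hκ j,
      color_kuhnCorner_succ hab hκ j', ← Fin.succ_inj] at heq

theorem kuhnPivot_kuhnCorner_zero [NeZero d] (a : Fin d → ℤ) :
    kuhnPivot (kuhnCorner a) 0 = kuhnCorner a (Fin.last d) - 1 := by
  have hlast : (-1 : Fin (d + 1)) = Fin.last d := by rw [← Fin.neg_last, neg_neg]
  have hone : kuhnCorner a 1 = a := by
    rw [← Fin.succ_zero_eq_one', kuhnCorner, Fin.cons_succ]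
    simp
  have hzero : kuhnCorner a 0 = a + 1 := rfl
  rw [kuhnPivot_zero, hlast, hone, hzero]
  ring

theorem kuhnPivot_kuhnCorner_zero_notMem [NeZero d] (a b : Fin d → ℤ) :
    kuhnPivot (kuhnCorner a) 0 ∉ Set.Icc a b := by
  intro hmem
  obtain ⟨j, hj⟩ := Fin.exists_succ_eq_of_ne_zero (Fin.last_pos' (n := d)).ne'
  have hle := hmem.1 j
  rw [kuhnPivot_kuhnCorner_zero, ← hj] at hle
  simp [kuhnCorner] at hle

/-! ### Parity -/

theorem IsDoor.eq_kuhnPivot_kuhnCorner [NeZero d] {v : Fin (d + 1) → Fin d → ℤ}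
    (h : IsDoor a b κ v) (hκ : HasLeastLowerColor a b κ)
    (hno : ∀ w, IsReached a b κ w → w (κ w) ≠ b (κ w)) (h0 : v 0 ∉ Set.Icc a b) :
    v = kuhnPivot (kuhnCorner a) := by
  obtain ⟨i, hi⟩ : ∃ i, v 0 i < a i := by
    by_contra! hle
    exact h0 ⟨hle, h.apply_zero_le_upper hno⟩
  have hfacet : ∀ m ≠ 0, v m = kuhnCorner a m := by
    intro m hm
    obtain ⟨j, rfl⟩ := Fin.exists_succ_eq_of_ne_zero hm
    exact funext (h.apply_succ hκ hi j)
  funext m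
  rcases eq_or_ne m 0 with rfl | hm
  · rw [kuhnPivot_kuhnCorner_zero, ← hfacet _ Fin.last_pos'.ne',
      (h.strictMono_and_last_eq hi).2, add_sub_cancel_right]
  · rw [kuhnPivot_of_ne_zero _ hm, hfacet m hm]

theorem finite_setOf_isDoor [NeZero d] (a b : Fin d → ℤ) (κ : (Fin d → ℤ) → Fin d) :
    {v | IsDoor a b κ v}.Finite := by
  refine (Set.finite_Icc (fun _ => a - 1) (fun _ => b + 1)).subset fun v hv => ?_
  have h1 := (hv.isReached 1 one_ne_zero).mem_Icc
  exact ⟨fun m => sub_le_iff_le_add.2 (h1.1.trans (hv.isKuhnCycle.le_add_one 1 m)),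
    fun m => (hv.isKuhnCycle.le_add_one m 1).trans (add_le_add_left h1.2 1)⟩

theorem even_ncard_setOf_isDoor [NeZero d] (a b : Fin d → ℤ) (κ : (Fin d → ℤ) → Fin d) :
    Even {v | IsDoor a b κ v}.ncard :=
  even_ncard_of_involution (finite_setOf_isDoor a b κ) kuhnPivot (fun _ hv => hv.pivot)
    (fun v _ => kuhnPivot_kuhnPivot v) (fun _ hv => hv.isKuhnCycle.pivot_ne)

theorem even_ncard_setOf_isDoor_inter [NeZero d] (a b : Fin d → ℤ) (κ : (Fin d → ℤ) → Fin d) :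
    Even ({v | IsDoor a b κ v} ∩ {v | v 0 ∈ Set.Icc a b}).ncard := by
  -- The other door of the simplex `v`: mark the vertex that has the same color as `v 0`.
  have hpartner (v : Fin (d + 1) → Fin d → ℤ) (hv : IsDoor a b κ v) :
      ∃ r ≠ 0, κ (v r) = κ (v 0) := hv.exists_color_eq _
  choose! r hr0 hrκ using hpartner
  have hrotate (v) (hv : IsDoor a b κ v) (h0 : v 0 ∈ Set.Icc a b) :
      IsDoor a b κ fun m => v (r v + m) :=
    hv.rotate h0 (hr0 v hv) (hrκ v hv)
  refine even_ncard_of_involution ((finite_setOf_isDoor a b κ).inter_of_left _)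
    (fun v m => v (r v + m)) ?_ ?_ ?_
  · rintro v ⟨hv, h0⟩
    refine ⟨hrotate v hv h0, ?_⟩
    simpa using (hv.isReached _ (hr0 v hv)).mem_Icc
  · rintro v ⟨hv, h0⟩
    have hv' := hrotate v hv h0
    have hinv : r (fun m => v (r v + m)) = -r v := by
      refine hv'.bijOn.injOn (hr0 _ hv') (neg_ne_zero.2 (hr0 v hv)) ?_
      simpa [hrκ v hv] using hrκ _ hv'
    simp [hinv]
  · rintro v ⟨hv, -⟩ heq
    exact (hv.isKuhnCycle.adj (hr0 v hv)).ne (by simpa using congrFun heq 0)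

theorem exists_isReached_apply_eq_upper (hab : ∀ i, a i < b i) (hκ : HasLeastLowerColor a b κ) :
    ∃ v, IsReached a b κ v ∧ v (κ v) = b (κ v) := by
  by_contra! hno
  have : NeZero d := ⟨(κ 0).pos.ne'⟩
  have houter : {v | IsDoor a b κ v} \ {v | v 0 ∈ Set.Icc a b} = {kuhnPivot (kuhnCorner a)} := by
    refine Set.Subset.antisymm (fun v hv => hv.1.eq_kuhnPivot_kuhnCorner hκ hno hv.2) ?_
    exact Set.singleton_subset_iff.2
      ⟨(isDoor_kuhnCorner hab hκ).pivot, kuhnPivot_kuhnCorner_zero_notMem a b⟩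
  have hcard := even_ncard_setOf_isDoor a b κ
  rw [← Set.ncard_inter_add_ncard_sdiff_eq_ncard _ {v | v 0 ∈ Set.Icc a b}
    (finite_setOf_isDoor a b κ), houter, Set.ncard_singleton, Nat.even_add_one] at hcard
  exact hcard (even_ncard_setOf_isDoor_inter a b κ)

theorem hex_theorem_dim_general (hab : ∀ i, a i < b i) (hκ : HasLeastLowerColor a b κ) :
    ∃ (i : Fin d) (k : ℕ) (q : Fin (k + 1) → (Fin d → ℤ)),
      (∀ j, q j ∈ Set.Icc a b ∧ κ (q j) = i) ∧
      (∀ j : Fin k, hexAdjD d (q j.castSucc) (q j.succ)) ∧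
      (q 0) i = a i ∧ (q (Fin.last k)) i = b i := by
  obtain ⟨v, ⟨u, hu, p, hp⟩, hv⟩ := exists_isReached_apply_eq_upper hab hκ
  exact ⟨κ v, p.length, fun j => p.getVert j, fun j => hp _ (p.getVert_mem_support j),
    fun j => p.adj_getVert_succ j.isLt, by simpa using hu, by simpa using hv⟩

theorem inBoard_iff_mem_Icc {n : ℕ} {v : Fin d → ℤ} :
    inBoard n d v ↔ v ∈ Set.Icc (fun _ => -1) (fun _ => (n : ℤ) + 1) :=
  forall_and

/-- **The `d`-dimensional HEX theorem.** For any coloring `κ` of the vertices of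
`H(n,d)` with colors in `{1,…,d}` (here `Fin d`) that assigns to each boundary
vertex its preassigned color (the least `i` with `v i = -1` if it exists,
and otherwise the least `i` with `v i = n+1`), there is a color `i` and a path of
vertices of color `i` joining a vertex with `i`-th coordinate `-1` to a vertex
with `i`-th coordinate `n+1`. -/
theorem hex_theorem_dim (n d : ℕ) (hd : 0 < d) (κ : (Fin d → ℤ) → Fin d)
    (hκ1 : ∀ v, inBoard n d v → (∃ i, v i = -1) →
      v (κ v) = -1 ∧ ∀ j, v j = -1 → κ v ≤ j)
    (hκ2 : ∀ v, inBoard n d v → (¬ ∃ i, v i = -1) → (∃ i, v i = (n : ℤ) + 1) →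
      v (κ v) = (n : ℤ) + 1 ∧ ∀ j, v j = (n : ℤ) + 1 → κ v ≤ j) :
    ∃ (i : Fin d) (k : ℕ) (q : Fin (k+1) → (Fin d → ℤ)),
      (∀ j, inBoard n d (q j) ∧ κ (q j) = i) ∧
      (∀ j : Fin k, hexAdjD d (q j.castSucc) (q j.succ)) ∧
      (q 0) i = -1 ∧ (q (Fin.last k)) i = (n : ℤ) + 1 := by
  simp only [inBoard_iff_mem_Icc] at hκ1 ⊢
  exact hex_theorem_dim_general (fun _ => by omega) fun v hv i hi => hκ1 v hv ⟨i, hi⟩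
end

section
/- Let P be a compact convex polytope and f: P → P a continuous map such that f(F) ⊆ F for every face F of P. Then f is surjective. -/
/-- `F` is a face of the convex set `P`: either `P` itself, or the intersection of
`P` with a supporting hyperplane. -/
def IsFaceOf {E : Type*} [NormedAddCommGroup E] [NormedSpace ℝ E] (F P : Set E) : Prop :=
  F = P ∨ ∃ (l : E →L[ℝ] ℝ) (c : ℝ), (∀ x ∈ P, l x ≤ c) ∧ F = {x ∈ P | l x = c}

/-!
If `f` misses `y`, then `y - f x` never vanishes on `P`, so there are functionals `v x`, depending
continuously on `x`, with `v x (y - f x) > 0`. The variational inequality for `v` provides a point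
`x` at which `v x` attains its maximum over `P`. The maximisers of `v x` form a face containing `x`,
hence also `f x`, so `v x y ≤ v x (f x)`, a contradiction.

The variational inequality rests on a covering lemma for the simplex, which takes the place of
Brouwer's theorem. It is obtained from Scarf's parity argument: dominant sets of a finite set of
points play the role of the cells of a triangulation, so that Sperner's count works without
constructing a triangulation.
-/

section Combinatorics

open Finset

variable {α β : Type*} [DecidableEq β]

lemma image_erase_eq_image_iff [DecidableEq α] {s : Finset α} {f : α → β} {a : α} (ha : a ∈ s) :
    (s.erase a).image f = s.image f ↔ ∃ b ∈ s, b ≠ a ∧ f b = f a := by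
  constructor
  · intro h
    obtain ⟨b, hb, hba⟩ := mem_image.1 (h ▸ mem_image_of_mem f ha)
    exact ⟨b, mem_of_mem_erase hb, ne_of_mem_erase hb, hba⟩
  · rintro ⟨b, hb, hba, hf⟩
    rw [← insert_erase ha, image_insert, erase_insert (notMem_erase a s), ← hf,
      insert_eq_of_mem (mem_image_of_mem f (mem_erase.2 ⟨hba, hb⟩))]

lemma card_filter_exists_ne_map_eq {s : Finset α} {f : α → β}
    [DecidablePred fun a => ∃ b ∈ s, b ≠ a ∧ f b = f a] (h : #s = #(s.image f) + 1) :
    #{a ∈ s | ∃ b ∈ s, b ≠ a ∧ f b = f a} = 2 := by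
  classical
  obtain ⟨a, ha, b, hb, hab, hfab⟩ :=
    exists_ne_map_eq_of_card_image_lt (s := s) (f := f) (by lia)
  have hinj : Set.InjOn f (s.erase a) := by
    rw [← card_image_iff, (image_erase_eq_image_iff ha).2 ⟨b, hb, hab.symm, hfab.symm⟩,
      card_erase_of_mem ha, h, Nat.add_sub_cancel]
  have heq {x y : α} (hx : x ∈ s) (hxa : x ≠ a) (hy : y ∈ s) (hya : y ≠ a) (hf : f x = f y) :
      x = y :=
    hinj (mem_erase.2 ⟨hxa, hx⟩) (mem_erase.2 ⟨hya, hy⟩) hf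
  rw [card_eq_two]
  refine ⟨a, b, hab, ext fun x => ?_⟩
  simp only [mem_filter, mem_insert, mem_singleton]
  constructor
  · rintro ⟨hx, y, hy, hyx, hf⟩
    by_contra! ⟨hxa, hxb⟩
    rcases eq_or_ne y a with rfl | hya
    · exact hxb (heq hx hxa hb hab.symm (hf.symm.trans hfab))
    · exact hyx (heq hy hya hx hxa hf)
  · rintro (rfl | rfl)
    exacts [⟨ha, b, hb, hab.symm, hfab.symm⟩, ⟨hb, a, ha, hab, hfab⟩]

open scoped Classical in
lemma card_covBy_image_eq [Fintype α] {B : Finset α} {c : α → β} (h : #B = #(B.image c) + 1) :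
    #{A | A ⋖ B ∧ A.image c = B.image c} = 2 := by
  rw [← card_filter_exists_ne_map_eq h,
    ← card_image_of_injOn (f := B.erase) ((erase_injOn B).mono (filter_subset _ B))]
  congr 1
  ext A
  simp only [mem_filter, mem_univ, true_and, mem_image, covBy_iff_exists_erase]
  constructor
  · rintro ⟨⟨b, hb, rfl⟩, hA⟩
    exact ⟨b, ⟨hb, (image_erase_eq_image_iff hb).1 hA⟩, rfl⟩
  · rintro ⟨b, ⟨hb, hex⟩, rfl⟩
    exact ⟨⟨b, hb, rfl⟩, (image_erase_eq_image_iff hb).2 hex⟩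

open scoped Classical in
lemma image_eq_univ_of_odd_card_covBy [Fintype α] [Fintype β] {B : Finset α} {c : α → β} {b : β}
    (hodd : Odd #{A | (#A + 1 = Fintype.card β ∧ A.image c = univ.erase b) ∧ A ⋖ B}) :
    B.image c = univ := by
  obtain ⟨A, hA⟩ := card_pos.1 hodd.pos
  obtain ⟨⟨hAcard, hA⟩, hAB⟩ := (mem_filter_univ A).1 hA
  have hcard : #B = #A + 1 := (Nat.covBy_iff_add_one_eq.1 hAB.card_finset).symm
  have hsub : univ.erase b ⊆ B.image c := hA ▸ image_subset_image hAB.le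
  by_contra hne
  have hB : B.image c = univ.erase b := by
    refine hsub.antisymm' fun x hx => mem_erase.2 ⟨?_, mem_univ x⟩
    rintro rfl
    exact hne (univ_subset_iff.1 (insert_erase (mem_univ x) ▸ insert_subset hx hsub))
  have htwo := card_covBy_image_eq (B := B) (c := c)
    (by rw [hB, card_erase_of_mem (mem_univ b), card_univ]; lia)
  rw [filter_congr (q := fun A => A ⋖ B ∧ A.image c = B.image c), htwo] at hodd
  · exact Nat.not_odd_iff_even.2 even_two hodd
  · rintro A' -
    rw [hB, and_comm]
    refine and_congr_right fun hA'B => and_iff_right ?_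
    rw [Nat.covBy_iff_add_one_eq.1 hA'B.card_finset, hcard, hAcard]

end Combinatorics

section Dominance

open Finset

variable {I U L : Type*}

/-- Dominant sets in the sense of Scarf: no `y` is strictly better than the worst member of `B` in
all of the rankings `u i` at once. -/
def IsDominant [LE L] (u : I → U → L) (B : Finset U) : Prop :=
  ∀ y, ∃ i, ∀ x ∈ B, u i y ≤ u i x

/-- `m` picks, for each ranking `u i`, a worst member of `A`. -/
structure IsMinSelection [LE L] (u : I → U → L) (A : Finset U) (m : I → U) : Prop where
  mem (i : I) : m i ∈ A
  le (i : I) {x : U} (hx : x ∈ A) : u i (m i) ≤ u i x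

/-- The candidates for entering a dominant set with worst members `m` when the role of `m k` is
given up: those beating the worst member in every ranking other than `u k`. -/
def exchangeSet [LT L] (u : I → U → L) (m : I → U) (k : I) : Set U :=
  {y | ∀ i ≠ k, u i (m i) < u i y}

variable [LinearOrder L] {u : I → U → L} {A B : Finset U} {m : I → U} {k l : I} {x y : U}

lemma IsDominant.subset (hB : IsDominant u B) (hAB : A ⊆ B) : IsDominant u A := fun y =>
  (hB y).imp fun _ hi x hx => hi x (hAB hx)

lemma exists_isMinSelection (u : I → U → L) (hA : A.Nonempty) : ∃ m, IsMinSelection u A m := by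
  choose m hmem hle using fun i => A.exists_min_image (u i) hA
  exact ⟨m, hmem, fun i x hx => hle i x hx⟩

namespace IsMinSelection

lemma isDominant_iff (hm : IsMinSelection u A m) :
    IsDominant u A ↔ ∀ y, ∃ i, u i y ≤ u i (m i) :=
  forall_congr' fun _ => exists_congr fun i =>
    ⟨fun h => h _ (hm.mem i), fun h _ hx => h.trans (hm.le i hx)⟩

lemma image_eq [Fintype I] [DecidableEq U] (hm : IsMinSelection u A m)
    (hu : ∀ i, Function.Injective (u i)) (hA : IsDominant u A) : univ.image m = A := by
  refine Subset.antisymm (image_subset_iff.2 fun i _ => hm.mem i) fun x hx => ?_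
  obtain ⟨i, hi⟩ := hA x
  exact mem_image.2 ⟨i, mem_univ i, hu i ((hm.le i hx).antisymm (hi _ (hm.mem i)))⟩

lemma le_of_mem_exchangeSet (hm : IsMinSelection u A m) (hA : IsDominant u A)
    (hy : y ∈ exchangeSet u m k) : u k y ≤ u k (m k) := by
  obtain ⟨i, hi⟩ := hm.isDominant_iff.1 hA y
  obtain rfl : i = k := by_contra fun hik => (hy i hik).not_ge hi
  exact hi

lemma notMem_of_mem_exchangeSet (hm : IsMinSelection u A m)
    (hu : ∀ i, Function.Injective (u i)) (hA : IsDominant u A) (hlk : l ≠ k) (hml : m l = m k)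
    (hx : x ∈ exchangeSet u m k) : x ∉ A := fun hxA => by
  have hxk : x = m k := hu k ((hm.le_of_mem_exchangeSet hA hx).antisymm (hm.le k hxA))
  exact (hx l hlk).ne (by rw [hxk, hml])

lemma eq_of_mem_exchangeSet (hm : IsMinSelection u A m) (hA : IsDominant u A)
    (hk : x ∈ exchangeSet u m k) (hl : x ∈ exchangeSet u m l) : k = l := by
  by_contra hkl
  exact (hl k hkl).not_ge (hm.le_of_mem_exchangeSet hA hk)

lemma isDominant_insert [DecidableEq U] (hm : IsMinSelection u A m) (hA : IsDominant u A)
    (hx : x ∈ exchangeSet u m k) (hmax : ∀ y ∈ exchangeSet u m k, u k y ≤ u k x) :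
    IsDominant u (insert x A) := by
  intro y
  simp only [forall_mem_insert]
  by_cases hy : y ∈ exchangeSet u m k
  · exact ⟨k, hmax y hy, fun z hz => (hm.le_of_mem_exchangeSet hA hy).trans (hm.le k hz)⟩
  · simp only [exchangeSet, Set.mem_ofPred_eq, not_forall, not_lt] at hy
    obtain ⟨i, hik, hi⟩ := hy
    exact ⟨i, hi.trans (hx i hik).le, fun z hz => hi.trans (hm.le i hz)⟩

lemma exists_exchange_of_isDominant_insert [Fintype I] [DecidableEq U]
    (hm : IsMinSelection u A m) (hu : ∀ i, Function.Injective (u i))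
    (hcard : #A + 1 = Fintype.card I) (hxA : x ∉ A) (hx : IsDominant u (insert x A)) :
    ∃ k, (∃ l, l ≠ k ∧ m l = m k) ∧ x ∈ exchangeSet u m k ∧
      ∀ y ∈ exchangeSet u m k, u k y ≤ u k x := by
  obtain ⟨m', hm'⟩ := exists_isMinSelection u (insert_nonempty x A)
  have himage : univ.image m' = insert x A := hm'.image_eq hu hx
  have hinj : Function.Injective m' := by
    rw [← Set.injOn_univ, ← coe_univ, ← card_image_iff, himage, card_insert_of_notMem hxA, hcard,
      card_univ]
  have hsurj {z : U} (hz : z ∈ insert x A) : ∃ i, m' i = z := by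
    simpa [← himage] using hz
  obtain ⟨k, hk⟩ := hsurj (mem_insert_self x A)
  have hm_eq {i : I} (hik : i ≠ k) : m' i = m i := by
    have hmem : m' i ∈ A :=
      mem_of_mem_insert_of_ne (hm'.mem i) fun h => hik (hinj (h.trans hk.symm))
    exact hu i ((hm'.le i (mem_insert_of_mem (hm.mem i))).antisymm (hm.le i hmem))
  have hxk : x ∈ exchangeSet u m k := fun i hik =>
    ((hm_eq hik ▸ hm'.le i (mem_insert_self x A)).lt_of_ne fun h => hxA (hu i h ▸ hm.mem i))
  refine ⟨k, ?_, hxk, fun y hy => ?_⟩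
  · obtain ⟨l, hl⟩ := hsurj (mem_insert_of_mem (hm.mem k))
    have hlk : l ≠ k := by
      rintro rfl
      exact hxA (hk ▸ hl ▸ hm.mem l)
    exact ⟨l, hlk, (hm_eq hlk).symm.trans hl⟩
  · obtain ⟨i, hi⟩ := hm'.isDominant_iff.1 hx y
    obtain rfl : i = k := by_contra fun hik => (hy i hik).not_ge (hm_eq hik ▸ hi)
    exact hk ▸ hi

open scoped Classical in
lemma card_covBy_isDominant [Fintype I] [Fintype U] (hm : IsMinSelection u A m)
    (hu : ∀ i, Function.Injective (u i)) (hcard : #A + 1 = Fintype.card I)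
    (hA : IsDominant u A) (hne : ∀ k, (exchangeSet u m k).Nonempty) :
    #{B | IsDominant u B ∧ A ⋖ B} = 2 := by
  choose x hx hmax using fun k =>
    (exchangeSet u m k).exists_max_image (u k) (Set.toFinite _) (hne k)
  have hnotMem {k : I} (hk : ∃ l, l ≠ k ∧ m l = m k) : x k ∉ A := by
    obtain ⟨l, hlk, hml⟩ := hk
    exact hm.notMem_of_mem_exchangeSet hu hA hlk hml (hx k)
  -- Exactly two indices share their worst member, and each of them allows one exchange.
  let K : Finset I := {k | ∃ l, l ≠ k ∧ m l = m k}
  have hK : #K = 2 := by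
    simpa [K] using card_filter_exists_ne_map_eq (s := univ) (f := m)
      (by rw [hm.image_eq hu hA, hcard, card_univ])
  have hinj : Set.InjOn (fun k => insert (x k) A) K := by
    intro k hk l _ hkl
    have hxkl : x k = x l := (insert_inj (hnotMem (by simpa [K] using hk))).1 hkl
    exact hm.eq_of_mem_exchangeSet hA (hx k) (hxkl ▸ hx l)
  rw [← hK, ← card_image_of_injOn hinj]
  congr 1
  ext B
  simp only [K, mem_filter, mem_univ, true_and, mem_image, covBy_iff_exists_insert]
  constructor
  · rintro ⟨hz, z, hzA, rfl⟩
    obtain ⟨k, hdup, hzk, hzmax⟩ := hm.exists_exchange_of_isDominant_insert hu hcard hzA hz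
    exact ⟨k, hdup, by rw [hu k ((hmax k z hzk).antisymm (hzmax _ (hx k)))]⟩
  · rintro ⟨k, hdup, rfl⟩
    exact ⟨hm.isDominant_insert hA (hx k) (hmax k), x k, hnotMem hdup, rfl⟩

end IsMinSelection

open scoped Classical in
lemma even_card_covBy_isDominant [Fintype I] [Fintype U] (hu : ∀ i, Function.Injective (u i))
    (hA : A.Nonempty) (hcard : #A + 1 = Fintype.card I)
    (hne : ∀ k, ∃ y, ∀ i ≠ k, ∃ x ∈ A, u i x < u i y) :
    Even #{B | IsDominant u B ∧ A ⋖ B} := by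
  by_cases hdom : IsDominant u A
  · obtain ⟨m, hm⟩ := exists_isMinSelection u hA
    rw [hm.card_covBy_isDominant hu hcard hdom]
    · exact even_two
    · refine fun k => (hne k).imp fun y hy i hik => ?_
      obtain ⟨x, hxA, hxy⟩ := hy i hik
      exact (hm.le i hxA).trans_lt hxy
  · rw [filter_false_of_mem fun B _ hB => hdom (hB.1.subset hB.2.le)]
    simp

end Dominance

section Scarf

open Finset

variable {I T L : Type*} [LinearOrder I]

/-- The rankings `v i` extended by one slack element per index: in the `i`-th ranking the slack
element `i` lies below everything, and all other slack elements lie above everything in `T`. -/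
def withSlack (v : I → T → L) (i : I) : T ⊕ I → WithBot (L ⊕ₗ I)
  | .inl t => (Sum.inlₗ (v i t) : L ⊕ₗ I)
  | .inr j => if j = i then ⊥ else (Sum.inrₗ j : L ⊕ₗ I)

/-- The facet of the slack simplex opposite to the slack element `i₀`. In the parity argument it is
the boundary door: the only labelled facet lying in an odd number of dominant cells. -/
def slackFace (T : Type*) [Fintype I] (i₀ : I) : Finset (T ⊕ I) :=
  (univ.erase i₀).map .inr

lemma card_slackFace_add_one [Fintype I] (i₀ : I) : #(slackFace T i₀) + 1 = Fintype.card I := by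
  rw [slackFace, card_map, card_erase_add_one (mem_univ i₀), card_univ]

lemma image_slackFace [Fintype I] (c : T → I) (i₀ : I) :
    (slackFace T i₀).image (Sum.elim c id) = univ.erase i₀ := by
  classical
  rw [slackFace, map_eq_image, image_image]
  exact image_id

lemma eq_slackFace_of_image_eq [Fintype I] (c : T → I) {i₀ : I} {A : Finset (T ⊕ I)}
    (hA : A.image (Sum.elim c id) = univ.erase i₀) (hinl : ∀ t, .inl t ∉ A) :
    A = slackFace T i₀ := by
  ext (t | j)
  · simp [slackFace, hinl]
  · rw [slackFace, ← hA]
    simp [hinl]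

variable {v : I → T → L} {i j : I} {t : T}

lemma withSlack_inr_self : withSlack v i (.inr i) = ⊥ := if_pos rfl

lemma withSlack_injective (hv : ∀ i, Function.Injective (v i)) (i : I) :
    Function.Injective (withSlack v i) := by
  rintro (s | j) (t | k) h
  · simpa [withSlack, (hv i).eq_iff] using h
  · by_cases hk : k = i <;> simp [withSlack, hk] at h
  · by_cases hj : j = i <;> simp [withSlack, hj] at h
  · by_cases hj : j = i <;> by_cases hk : k = i <;> simp_all [withSlack]

variable [LinearOrder L]

lemma withSlack_inl_le_inl {s : T} :
    withSlack v i (.inl s) ≤ withSlack v i (.inl t) ↔ v i s ≤ v i t := by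
  simp [withSlack]

lemma withSlack_inr_self_lt_inl : withSlack v i (.inr i) < withSlack v i (.inl t) := by
  simp [withSlack]

lemma withSlack_inl_lt_inr (hji : j ≠ i) : withSlack v i (.inl t) < withSlack v i (.inr j) := by
  simp [withSlack, hji]

variable [Fintype I]

open scoped Classical in
lemma card_slackFace_covBy_isDominant [Fintype T] [Nonempty T]
    (hv : ∀ i, Function.Injective (v i)) (i₀ : I) :
    #{B | IsDominant (withSlack v) B ∧ slackFace T i₀ ⋖ B} = 1 := by
  obtain ⟨t, -, ht⟩ := exists_max_image univ (v i₀) univ_nonempty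
  rw [card_eq_one]
  refine ⟨insert (.inl t) (slackFace T i₀), ext fun B => ?_⟩
  simp only [mem_filter, mem_univ, true_and, mem_singleton, covBy_iff_exists_insert]
  constructor
  · rintro ⟨hdom, x, hx, rfl⟩
    obtain ⟨i, hi⟩ := hdom (.inl t)
    obtain rfl : i = i₀ := by
      by_contra hii₀
      exact withSlack_inr_self_lt_inl.not_ge (hi (.inr i) (by simp [slackFace, hii₀]))
    have htx := hi x (mem_insert_self x _)
    rcases x with s | j
    · rw [hv i ((ht s (mem_univ s)).antisymm (withSlack_inl_le_inl.1 htx))]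
    · obtain rfl : j = i := by simpa [slackFace] using hx
      exact absurd htx withSlack_inr_self_lt_inl.not_ge
  · rintro rfl
    refine ⟨?_, .inl t, by simp [slackFace], rfl⟩
    rintro (s | j)
    · refine ⟨i₀, (forall_mem_insert _ _ _).2 ⟨withSlack_inl_le_inl.2 (ht s (mem_univ s)), ?_⟩⟩
      simp only [slackFace, forall_mem_map, mem_erase, mem_univ, and_true]
      exact fun k hk => (withSlack_inl_lt_inr hk).le
    · exact ⟨j, fun x _ => withSlack_inr_self.trans_le bot_le⟩

open scoped Classical in
lemma even_card_covBy_isDominant_withSlack [Fintype T] (hv : ∀ i, Function.Injective (v i))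
    {A : Finset (T ⊕ I)} (ht : .inl t ∈ A) (hcard : #A + 1 = Fintype.card I) :
    Even #{B | IsDominant (withSlack v) B ∧ A ⋖ B} :=
  even_card_covBy_isDominant (withSlack_injective hv) ⟨_, ht⟩ hcard fun k =>
    ⟨.inr k, fun _ hik => ⟨.inl t, ht, withSlack_inl_lt_inr hik.symm⟩⟩

open scoped Classical in
lemma odd_card_covBy_isDominant_withSlack_iff [Fintype T] [Nonempty T]
    (hv : ∀ i, Function.Injective (v i)) (c : T → I) (i₀ : I) {A : Finset (T ⊕ I)}
    (hcard : #A + 1 = Fintype.card I) (hA : A.image (Sum.elim c id) = univ.erase i₀) :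
    Odd #{B | IsDominant (withSlack v) B ∧ A ⋖ B} ↔ A = slackFace T i₀ := by
  refine ⟨fun hodd => eq_slackFace_of_image_eq c hA fun t ht => ?_, ?_⟩
  · exact Nat.not_even_iff_odd.2 hodd (even_card_covBy_isDominant_withSlack hv ht hcard)
  · rintro rfl
    rw [card_slackFace_covBy_isDominant hv]
    exact odd_one

theorem exists_isDominant_withSlack_image_eq_univ [Finite T] [Nonempty T]
    (hv : ∀ i, Function.Injective (v i)) (c : T → I) :
    ∃ B, IsDominant (withSlack v) B ∧ B.image (Sum.elim c id) = univ := by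
  classical
  have := Fintype.ofFinite T
  let i₀ : I := c (Classical.arbitrary T)
  let cells : Finset (Finset (T ⊕ I)) := {B | IsDominant (withSlack v) B}
  let doors : Finset (Finset (T ⊕ I)) :=
    {A | #A + 1 = Fintype.card I ∧ A.image (Sum.elim c id) = univ.erase i₀}
  have hdoors : {A ∈ doors | Odd #{B ∈ cells | A ⋖ B}} = {slackFace T i₀} := by
    ext A
    simp only [doors, cells, filter_filter, mem_filter_univ, mem_singleton]
    refine ⟨fun ⟨⟨hcard, hA⟩, hodd⟩ =>
      (odd_card_covBy_isDominant_withSlack_iff hv c i₀ hcard hA).1 hodd, ?_⟩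
    rintro rfl
    have hcard := card_slackFace_add_one (T := T) i₀
    have hA := image_slackFace c i₀
    exact ⟨⟨hcard, hA⟩, (odd_card_covBy_isDominant_withSlack_iff hv c i₀ hcard hA).2 rfl⟩
  have hsum : Odd (∑ B ∈ cells, #{A ∈ doors | A ⋖ B}) := by
    have hcount := sum_card_bipartiteAbove_eq_sum_card_bipartiteBelow
      (s := doors) (t := cells) (· ⋖ ·)
    simp only [bipartiteAbove, bipartiteBelow] at hcount
    rw [← hcount, odd_sum_iff_odd_card_odd, hdoors, card_singleton]
    exact odd_one
  obtain ⟨B, hB⟩ := card_pos.1 ((odd_sum_iff_odd_card_odd _).1 hsum).pos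
  obtain ⟨hBcell, hodd⟩ := mem_filter.1 hB
  rw [filter_filter] at hodd
  exact ⟨B, (mem_filter_univ B).1 hBcell, image_eq_univ_of_odd_card_covBy hodd⟩

theorem exists_finset_forall_exists_forall_le [Finite T] (w : T → T → L) :
    ∃ σ : Finset T, ∀ y, ∃ s ∈ σ, ∀ t ∈ σ, w s y ≤ w s t := by
  have := Fintype.ofFinite T
  let := LinearOrder.lift' _ (Fintype.equivFin T).injective
  rcases isEmpty_or_nonempty T
  · exact ⟨∅, isEmptyElim⟩
  let v (s t : T) : L ×ₗ T := toLex (w s t, t)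
  have hv (s : T) : Function.Injective (v s) := fun t t' h => (Prod.ext_iff.1 h).2
  obtain ⟨B, hdom, hB⟩ := exists_isDominant_withSlack_image_eq_univ hv id
  refine ⟨B.toLeft, fun y => ?_⟩
  obtain ⟨s, hs⟩ := hdom (.inl y)
  have hinr : .inr s ∉ B := fun h => withSlack_inr_self_lt_inl.not_ge (hs _ h)
  have hinl : .inl s ∈ B := by
    obtain ⟨t | t, ht, rfl⟩ := mem_image.1 (hB ▸ mem_univ s)
    exacts [ht, absurd ht hinr]
  refine ⟨s, mem_toLeft.2 hinl, fun t ht => ?_⟩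
  exact Prod.Lex.monotone_fst _ _ (withSlack_inl_le_inl.1 (hs _ (mem_toLeft.1 ht)))

end Scarf

section CoveringLemma

open Finset Metric

variable {I : Type*}

lemma exists_finset_lowerBound_of_labeling {T L : Type*} [Finite T] [Nonempty T] [LinearOrder L]
    [Zero L] {p : T → I → L} (hp : ∀ t, 0 ≤ p t) (c : T → I) :
    ∃ (σ : Finset T) (m : I → L), σ.Nonempty ∧ 0 ≤ m ∧ (∀ t ∈ σ, m ≤ p t) ∧
      (∀ t, ∃ i, p t i ≤ m i) ∧ ∀ i, m i = 0 ∨ ∃ t ∈ σ, c t = i := by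
  classical
  obtain ⟨σ, hσ⟩ := exists_finset_forall_exists_forall_le fun s t => p t (c s)
  have hσ_ne : σ.Nonempty := (hσ (Classical.arbitrary T)).imp fun _ hs => hs.1
  refine ⟨σ, fun i => if i ∈ σ.image c then σ.inf' hσ_ne fun t => p t i else 0, hσ_ne,
    fun i => ?_, fun t ht i => ?_, fun t => ?_, fun i => ?_⟩
  · dsimp only
    split_ifs
    exacts [le_inf' _ _ fun t _ => hp t i, le_rfl]
  · dsimp only
    split_ifs
    exacts [inf'_le _ ht, hp t i]
  · obtain ⟨s, hs, hst⟩ := hσ t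
    exact ⟨c s, (le_inf' _ _ hst).trans_eq (if_pos (mem_image_of_mem c hs)).symm⟩
  · by_cases hi : i ∈ σ.image c
    exacts [.inr (mem_image.1 hi), .inl (if_neg hi)]

variable [Fintype I] {m x : I → ℝ} {δ ε : ℝ}

lemma apply_lt_add_of_mem_stdSimplex (hx : x ∈ stdSimplex ℝ I) (hmx : m ≤ x)
    (hm : 1 - ε < ∑ i, m i) (i : I) : x i < m i + ε := by
  have hle : x i - m i ≤ ∑ j, (x j - m j) :=
    single_le_sum (f := fun j => x j - m j) (fun j _ => sub_nonneg.2 (hmx j)) (mem_univ i)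
  rw [sum_sub_distrib, hx.2] at hle
  linarith

lemma exists_mem_stdSimplex_add_eq [Nonempty I] (hm : 0 ≤ m) (hsum : ∑ i, m i ≤ 1) :
    ∃ z ∈ stdSimplex ℝ I, ∀ i, z i = m i + (1 - ∑ j, m j) / Fintype.card I :=
  ⟨_, ⟨fun i => add_nonneg (hm i) (div_nonneg (sub_nonneg.2 hsum) (Nat.cast_nonneg _)),
    by simp [sum_add_distrib, card_univ, mul_div_cancel₀]⟩, fun _ => rfl⟩

lemma one_sub_card_mul_lt_sum [Nonempty I] {T : Set (I → ℝ)} (hm : 0 ≤ m) (hsum : ∑ i, m i ≤ 1)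
    (hnet : stdSimplex ℝ I ⊆ ⋃ y ∈ T, ball y δ) (hT : ∀ y ∈ T, ∃ i, y i ≤ m i) :
    1 - Fintype.card I * δ < ∑ i, m i := by
  -- The net is tested at the point obtained from `m` by distributing the missing mass equally.
  obtain ⟨z, hz, hzm⟩ := exists_mem_stdSimplex_add_eq hm hsum
  obtain ⟨y, hy, hzy⟩ := Set.mem_iUnion₂.1 (hnet hz)
  obtain ⟨i, hi⟩ := hT y hy
  have hdist : z i - y i < δ :=
    (le_abs_self _).trans_lt ((dist_le_pi_dist z y i).trans_lt (mem_ball.1 hzy))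
  have hgap : (1 - ∑ j, m j) / Fintype.card I < δ := by linarith [hzm i]
  rw [div_lt_iff₀ (Nat.cast_pos.2 Fintype.card_pos)] at hgap
  linarith

lemma exists_forall_lt_or_exists_mem_dist_lt [Nonempty I] {K : I → Set (I → ℝ)}
    (hK : stdSimplex ℝ I ⊆ ⋃ i, K i) (hε : 0 < ε) :
    ∃ x ∈ stdSimplex ℝ I, ∀ i, x i < ε ∨ ∃ y ∈ K i, dist x y < ε := by
  have hcard : (0 : ℝ) < Fintype.card I := Nat.cast_pos.2 Fintype.card_pos
  obtain ⟨T, hT, hTfin, hnet⟩ :=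
    (isCompact_stdSimplex ℝ I).finite_cover_balls (div_pos hε hcard)
  obtain ⟨z, hz⟩ : (stdSimplex ℝ I).Nonempty := by
    classical exact ⟨_, single_mem_stdSimplex ℝ (Classical.arbitrary I)⟩
  have hT_ne : Nonempty T := (Set.mem_iUnion₂.1 (hnet hz)).elim fun t ht => ⟨t, ht.1⟩
  have := hTfin.to_subtype
  choose c hc using fun t : T => Set.mem_iUnion.1 (hK (hT t.2))
  obtain ⟨σ, m, ⟨x, hx⟩, hm_nonneg, hm_le, hm_dom, hm⟩ :=
    exists_finset_lowerBound_of_labeling (p := fun t : T => t.1) (fun t => (hT t.2).1) c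
  have hm_sum : ∑ i, m i ≤ 1 := (sum_le_sum fun i _ => hm_le x hx i).trans_eq (hT x.2).2
  have hm_lt : 1 - ε < ∑ i, m i := by
    rw [← mul_div_cancel₀ ε hcard.ne']
    exact one_sub_card_mul_lt_sum hm_nonneg hm_sum hnet fun y hy => hm_dom ⟨y, hy⟩
  have hlt {t : T} (ht : t ∈ σ) (i : I) : t.1 i < m i + ε :=
    apply_lt_add_of_mem_stdSimplex (hT t.2) (hm_le t ht) hm_lt i
  refine ⟨x.1, hT x.2, fun j => ?_⟩
  rcases hm j with hj | ⟨t, ht, rfl⟩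
  · exact .inl ((hlt hx j).trans_eq (by rw [hj, zero_add]))
  · refine .inr ⟨t.1, hc t, (dist_pi_lt_iff hε).2 fun i => abs_sub_lt_iff.2 ⟨?_, ?_⟩⟩
    · linarith [hlt hx i, hm_le t ht i]
    · linarith [hlt ht i, hm_le x hx i]

theorem exists_mem_stdSimplex_forall_eq_zero_or_mem [Nonempty I] {K : I → Set (I → ℝ)}
    (hcl : ∀ i, IsClosed (K i)) (hK : stdSimplex ℝ I ⊆ ⋃ i, K i) :
    ∃ x ∈ stdSimplex ℝ I, ∀ i, x i = 0 ∨ x ∈ K i := by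
  classical
  by_contra! hno
  let V (i : I) : Set (I → ℝ) := {x | x i ≠ 0} ∩ (K i)ᶜ
  have hVopen (i : I) : IsOpen (V i) :=
    (isOpen_ne_fun (continuous_apply i) continuous_const).inter (hcl i).isOpen_compl
  have hVcover : stdSimplex ℝ I ⊆ ⋃ i, V i := fun x hx => Set.mem_iUnion.2 (hno x hx)
  obtain ⟨δ, hδ, hball⟩ := lebesgue_number_lemma_of_metric (isCompact_stdSimplex ℝ I) hVopen hVcover
  obtain ⟨x, hx, hxK⟩ := exists_forall_lt_or_exists_mem_dist_lt hK hδ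
  obtain ⟨i, hi⟩ := hball x hx
  rcases hxK i with hxi | ⟨y, hy, hxy⟩
  · refine (@hi (Function.update x i 0) ?_).1 (Function.update_self i 0 x)
    rw [mem_ball, dist_pi_lt_iff hδ]
    intro j
    rcases eq_or_ne j i with rfl | hj
    · simpa [abs_of_nonneg (hx.1 j)] using hxi
    · simpa [hj] using hδ
  · exact (hi (mem_ball'.2 hxy)).2 hy

end CoveringLemma

section VariationalInequality

variable {E : Type*} [NormedAddCommGroup E] [NormedSpace ℝ E] {P : Set E} {v : P → StrongDual ℝ E}

theorem exists_forall_apply_le_apply_self_of_finite {ι : Type*} [Finite ι] [Nonempty ι]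
    (hP : Convex ℝ P) (hv : Continuous v) (p : ι → P) :
    ∃ x : P, ∀ i, v x (p i) ≤ v x x := by
  have := Fintype.ofFinite ι
  let q (w : stdSimplex ℝ ι) : P :=
    ⟨∑ i, w.1 i • (p i : E), hP.sum_mem (fun i _ => w.2.1 i) w.2.2 fun i _ => (p i).2⟩
  have hq : Continuous q := (continuous_finsetSum _ fun i _ =>
    ((continuous_apply i).comp continuous_subtype_val).smul continuous_const).subtype_mk _
  let K (i : ι) : Set (stdSimplex ℝ ι) := {w | ∀ j, v (q w) (p j) ≤ v (q w) (p i)}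
  have hK_closed (i : ι) : IsClosed (K i) := by
    simp only [K, Set.ofPred_forall]
    exact isClosed_iInter fun j => isClosed_le ((hv.comp hq).clm_apply continuous_const)
      ((hv.comp hq).clm_apply continuous_const)
  have hK_cover : stdSimplex ℝ ι ⊆ ⋃ i, Subtype.val '' K i := fun w hw => by
    obtain ⟨i, hi⟩ := Finite.exists_max fun i => v (q ⟨w, hw⟩) (p i)
    exact Set.mem_iUnion.2 ⟨i, ⟨w, hw⟩, hi, rfl⟩
  obtain ⟨w, hw, hwK⟩ := exists_mem_stdSimplex_forall_eq_zero_or_mem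
    (fun i => (isClosed_stdSimplex ℝ ι).isClosedMap_subtype_val _ (hK_closed i)) hK_cover
  lift w to stdSimplex ℝ ι using hw
  have hmax (i : ι) : w.1 i = 0 ∨ w ∈ K i := by simpa using hwK i
  refine ⟨q w, fun j => ?_⟩
  calc v (q w) (p j) = ∑ i, w.1 i * v (q w) (p j) := by rw [← Finset.sum_mul, w.2.2, one_mul]
    _ ≤ ∑ i, w.1 i * v (q w) (p i) := Finset.sum_le_sum fun i _ => by
      rcases hmax i with hi | hi
      · simp [hi]
      · exact mul_le_mul_of_nonneg_left (hi j) (w.2.1 i)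
    _ = v (q w) (q w) := by simp [q]

theorem exists_forall_apply_le_apply_self (hPc : IsCompact P) (hP : Convex ℝ P)
    (hne : P.Nonempty) (hv : Continuous v) :
    ∃ x : P, ∀ z ∈ P, v x z ≤ v x x := by
  have : CompactSpace P := isCompact_iff_compactSpace.1 hPc
  have : Nonempty P := hne.to_subtype
  let C (z : P) : Set P := {x | v x z ≤ v x x}
  have hC_closed (z : P) : IsClosed (C z) := isClosed_le (by fun_prop) (by fun_prop)
  obtain ⟨x, -, hx⟩ := isCompact_univ.inter_iInter_nonempty C hC_closed fun σ => by
    rcases σ.eq_empty_or_nonempty with rfl | hσ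
    · simp
    · have := hσ.to_subtype
      obtain ⟨x, hx⟩ := exists_forall_apply_le_apply_self_of_finite hP hv fun z : σ => z.1
      exact ⟨x, trivial, Set.mem_iInter₂.2 fun z hz => hx ⟨z, hz⟩⟩
  exact ⟨x, fun z hz => Set.mem_iInter.1 hx ⟨z, hz⟩⟩

lemma exists_continuous_forall_apply_pos {X : Type*} [TopologicalSpace X] [CompactSpace X]
    {g : X → E} (hg : Continuous g) (h0 : ∀ x, g x ≠ 0) :
    ∃ v : X → StrongDual ℝ E, Continuous v ∧ ∀ x, 0 < v x (g x) := by
  obtain ⟨L, hL⟩ := isCompact_univ.elim_finite_subcover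
    (fun l : StrongDual ℝ E => {x | 0 < l (g x)})
    (fun l => isOpen_lt continuous_const (by fun_prop)) fun x _ => by
      obtain ⟨l, hl⟩ := SeparatingDual.exists_eq_one (R := ℝ) (h0 x)
      exact Set.mem_iUnion.2 ⟨l, one_pos.trans_eq hl.symm⟩
  refine ⟨fun x => ∑ l ∈ L, max (l (g x)) 0 • l, by fun_prop, fun x => ?_⟩
  obtain ⟨l, hl, hlx⟩ := Set.mem_iUnion₂.1 (hL (Set.mem_univ x))
  have hlx : 0 < l (g x) := hlx
  rw [sum_apply]
  refine Finset.sum_pos' (fun l' _ => ?_) ⟨l, hl, ?_⟩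
  · rcases le_total (l' (g x)) 0 with h | h <;> simp [h, mul_self_nonneg]
  · simpa [hlx.le] using hlx.ne'

end VariationalInequality

theorem face_preserving_map_surjective_general {E : Type*} [NormedAddCommGroup E] [NormedSpace ℝ E]
    {P : Set E} (hPc : IsCompact P) (hP : Convex ℝ P) (f : C(P, P))
    (hf : ∀ F, IsFaceOf F P → ∀ x : P, (x : E) ∈ F → (f x : E) ∈ F) :
    Function.Surjective f := by
  intro y
  by_contra! hy
  have : CompactSpace P := isCompact_iff_compactSpace.1 hPc
  obtain ⟨v, hv, hpos⟩ := exists_continuous_forall_apply_pos (g := fun x => (y - f x : E))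
    (by fun_prop) fun x => sub_ne_zero.2 fun h => hy x (Subtype.ext h.symm)
  obtain ⟨x, hx⟩ := exists_forall_apply_le_apply_self hPc hP ⟨y, y.2⟩ hv
  have hface : v x (f x) = v x x :=
    (hf {z ∈ P | v x z = v x x} (.inr ⟨v x, v x x, hx, rfl⟩) x ⟨x.2, rfl⟩).2
  have hlt : v x (f x) < v x y := sub_pos.1 (map_sub (v x) _ _ ▸ hpos x)
  exact (hx y y.2).not_gt (hface ▸ hlt)

/-- If `P` is a (compact convex) polytope and `f : P → P` is a continuous map with
`f(F) ⊆ F` for every face `F` of `P`, then `f` is surjective. -/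
theorem face_preserving_map_surjective (n : ℕ)
    (S : Finset (EuclideanSpace ℝ (Fin n)))
    (P : Set (EuclideanSpace ℝ (Fin n)))
    (hP : P = convexHull ℝ (S : Set (EuclideanSpace ℝ (Fin n))))
    (f : C(P, P))
    (hf : ∀ F, IsFaceOf F P → ∀ x : P, (x : EuclideanSpace ℝ (Fin n)) ∈ F →
      (f x : EuclideanSpace ℝ (Fin n)) ∈ F) :
    Function.Surjective f := by
  subst hP
  exact face_preserving_map_surjective_general (S.finite_toSet.isCompact_convexHull ℝ)
    (convex_convexHull ℝ _) f hf
end
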